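/- (Anisotropic degenerate coercivity for the initial characteristic function of a line-concentrated measure.) Let 0 < s < 1 and let the collision kernel b satisfy b(cos θ)·θ^{2+2s} → K as θ → 0+ for some K > 0. Let F₀ be a Borel probability measure on ℝ³ concentrated on the third coordinate axis (F₀({(0,0,v₃) : v₃ ∈ ℝ}) = 1) but not a single Dirac mass, and let ψ₀ be its characteristic function. Then there exist R > 0 and c > 0 such that for every measurable h : ℝ³ → ℂ with ∫ (1+|ξ|²)^s |h(ξ)|² dξ < ∞: ∫_{ℝ³} ( ∫_{S²} b(ξ·σ/|ξ|)(1 − |ψ₀(ξ⁻)|) dσ ) |h(ξ)|² dξ ≥ c ∫_{{|ξ| ≥ R}} ( |ξ₁|² + |ξ₂|² + |ξ₃| )^{s} |h(ξ)|² dξ, where ξ⁻ = (ξ − |ξ|σ)/2. -/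

import Mathlib

noncomputable section

open MeasureTheory Real Filter Metric Set
open scoped RealInnerProductSpace Topology

/-- ℝ³ as a Euclidean space. -/
abbrev E3 : Type := EuclideanSpace ℝ (Fin 3)

/-- The surface measure on the unit sphere S² ⊂ ℝ³. -/
def sphμ : Measure (sphere (0 : E3) 1) := (volume : Measure E3).toSphere

/-- The characteristic function (Fourier transform) of a Borel measure on ℝ³,
`ψ(ξ) = ∫ e^{-i v·ξ} dΨ(v)`. -/
def charFn (Ψ : Measure E3) (ξ : E3) : ℂ :=
  ∫ v, Complex.exp (-(Complex.I * (⟪v, ξ⟫ : ℂ))) ∂Ψ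

/-- `ψ` is a characteristic function of some Borel probability measure on ℝ³. -/
def IsCharFn (ψ : E3 → ℂ) : Prop :=
  ∃ Ψ : Measure E3, IsProbabilityMeasure Ψ ∧ ψ = charFn Ψ

/-- Finiteness of `‖φ - 1‖_α`, i.e. the quantitative part of membership in `𝒦^α`. -/
def KBdd (α : ℝ) (φ : E3 → ℂ) : Prop :=
  ∃ C : ℝ, ∀ ξ : E3, ξ ≠ 0 → ‖φ ξ - 1‖ ≤ C * ‖ξ‖ ^ α

/-- Membership in the space `𝒦^α`. -/
def memK (α : ℝ) (φ : E3 → ℂ) : Prop := IsCharFn φ ∧ KBdd α φ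

/-- The distance `‖φ - φ'‖_α = sup_{ξ ≠ 0} |φ(ξ) - φ'(ξ)|/|ξ|^α` on `𝒦^α`. -/
def Kdist (α : ℝ) (φ φ' : E3 → ℂ) : ℝ :=
  ⨆ ξ : {ξ : E3 // ξ ≠ 0}, ‖φ ξ.1 - φ' ξ.1‖ / ‖(ξ.1 : E3)‖ ^ α

/-- `ξ⁺ = ξ/2 + (|ξ|/2)σ`. -/
def xiPlus (ξ : E3) (σ : sphere (0 : E3) 1) : E3 := (1/2 : ℝ) • ξ + (‖ξ‖ / 2) • (σ : E3)

/-- `ξ⁻ = ξ/2 - (|ξ|/2)σ`. -/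
def xiMinus (ξ : E3) (σ : sphere (0 : E3) 1) : E3 := (1/2 : ℝ) • ξ - (‖ξ‖ / 2) • (σ : E3)

/-- The Bobylev collision integrand at time `t`, frequency `ξ`, direction `σ`. -/
def bobylevIntegrand (b : ℝ → ℝ) (ψ : ℝ → E3 → ℂ) (t : ℝ) (ξ : E3)
    (σ : sphere (0 : E3) 1) : ℂ :=
  (b (⟪ξ, (σ : E3)⟫ / ‖ξ‖) : ℂ) *
    (ψ t (xiPlus ξ σ) * ψ t (xiMinus ξ σ) - ψ t ξ)

/-- `ψ : [0,∞) × ℝ³ → ℂ` is a solution of the Fourier-transformed (Bobylev)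
homogeneous Boltzmann Cauchy problem with collision kernel `b` and initial datum `ψ₀`. -/
structure IsBobylevSolution (b : ℝ → ℝ) (ψ : ℝ → E3 → ℂ) (ψ₀ : E3 → ℂ) : Prop where
  cont : ContinuousOn (fun p : ℝ × E3 => ψ p.1 p.2) (Set.Ici 0 ×ˢ Set.univ)
  init : ψ 0 = ψ₀
  isCharFn : ∀ t ≥ 0, IsCharFn (ψ t)
  integrable : ∀ t ≥ 0, ∀ ξ : E3, Integrable (bobylevIntegrand b ψ t ξ) sphμ
  eq : ∀ t ≥ 0, ∀ ξ : E3, HasDerivWithinAt (fun τ => ψ τ ξ)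
      (∫ σ, bobylevIntegrand b ψ t ξ σ ∂sphμ) (Set.Ici 0) t

/-- Continuity of `t ↦ ψ(t,·)` from `[0,∞)` into the metric space `(𝒦^α, ‖·‖_α)`. -/
def KContinuous (α : ℝ) (ψ : ℝ → E3 → ℂ) : Prop :=
  ∀ t₀ ∈ Set.Ici (0:ℝ), Tendsto (fun t => Kdist α (ψ t) (ψ t₀)) (𝓝[Set.Ici (0:ℝ)] t₀) (𝓝 0)

/-- The angular singularity assumption `b(cos θ) θ^{2+2s} → K` as `θ → 0+`. -/
def KernelSingular (b : ℝ → ℝ) (s K : ℝ) : Prop :=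
  Tendsto (fun θ : ℝ => b (Real.cos θ) * θ ^ (2 + 2*s)) (𝓝[>] 0) (𝓝 K)

/-!
In dimension `n`, let `e` be a unit vector spanning the line that carries `μ`. Since `μ` is not a
Dirac mass, its symmetrization has positive truncated variance, so `1 - |ψ(ζ)| ≥ c ⟪e, ζ⟫²` for
small `⟪e, ζ⟫`. Tilting `ξ / |ξ|` by an angle of order `τ`, in the direction orthogonal to `ξ` in
which the transverse and radial contributions to `⟪e, ξ⁻⟫` add up, and letting `σ` vary over a cap
of radius `τ / 2` around the result, one finds `|⟪e, ξ⁻⟫| ≈ τ √(|ξ|² - ⟪e, ξ⟫²) + τ² |⟪e, ξ⟫|`.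
With `Q = |ξ|² - ⟪e, ξ⟫² + |⟪e, ξ⟫|` the choice `τ ≈ Q ^ (-1 / 2)` makes this of order one. The cap
has area of order `τ ^ (n - 1)` and the kernel is of order `τ ^ (-(n - 1) - 2 * s)` on it, so the
cap alone contributes `τ ^ (-2 * s) ≈ Q ^ s` to the integral over `σ`.
-/

open scoped Pointwise ENNReal
open Module (finrank)
open InnerProductGeometry (angle angle_nonneg angle_le_pi cos_angle angle_smul_left_of_pos)

section CharFun

variable {E : Type*} [NormedAddCommGroup E] [InnerProductSpace ℝ E]

lemma eq_inner_smul_of_mem_span_singleton {e v : E} (he : ‖e‖ = 1)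
    (hv : v ∈ Submodule.span ℝ {e}) : v = ⟪e, v⟫ • e := by
  obtain ⟨r, rfl⟩ := Submodule.mem_span_singleton.1 hv
  rw [real_inner_smul_right, real_inner_self_eq_norm_sq, he, one_pow, mul_one]

variable [MeasurableSpace E] [BorelSpace E]

lemma charFun_conv_map_neg [SecondCountableTopology E] (μ : Measure E) [IsFiniteMeasure μ] (t : E) :
    charFun (μ.conv (μ.map Neg.neg)) t = (‖charFun μ t‖ ^ 2 : ℝ) := by
  have hneg : charFun (μ.map Neg.neg) t = charFun μ (-t) := by
    simpa [Function.comp_def] using charFun_map_smul (μ := μ) (-1) t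
  rw [charFun_conv, hneg, charFun_neg, Complex.mul_conj, Complex.normSq_eq_norm_sq]

lemma conv_map_neg_singleton_zero_ne_one {G : Type*} [AddCommGroup G] [MeasurableSpace G]
    [MeasurableAdd₂ G] [MeasurableNeg G] [MeasurableSingletonClass G] {μ : Measure G}
    [IsProbabilityMeasure μ] (hμ : ∀ a, μ {a} ≠ 1) : (μ.conv (μ.map Neg.neg)) {0} ≠ 1 := by
  intro h
  have : IsProbabilityMeasure (μ.map Neg.neg) :=
    Measure.isProbabilityMeasure_map measurable_neg.aemeasurable
  have hconv : ∀ᵐ z ∂(μ.conv (μ.map Neg.neg)), z = 0 :=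
    (mem_ae_iff_prob_eq_one (measurableSet_singleton 0)).2 h
  have hprod : ∀ᵐ z ∂μ.prod (μ.map Neg.neg), z.1 + z.2 = 0 :=
    ae_of_ae_map measurable_add.aemeasurable hconv
  obtain ⟨x, hx⟩ := (Measure.ae_ae_of_ae_prod hprod).exists
  refine hμ x ((mem_ae_iff_prob_eq_one (measurableSet_singleton x)).1 ?_)
  filter_upwards [ae_of_ae_map measurable_neg.aemeasurable hx] with y hy
  exact (add_neg_eq_zero.1 hy).symm

lemma integrable_cos_mul (ν : Measure ℝ) [IsFiniteMeasure ν] (t : ℝ) :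
    Integrable (fun x ↦ cos (t * x)) ν :=
  (integrable_const (1 : ℝ)).mono' (by fun_prop) (.of_forall fun _ ↦ abs_cos_le_one _)

lemma re_charFun_eq_integral_cos (ν : Measure ℝ) [IsFiniteMeasure ν] (t : ℝ) :
    (charFun ν t).re = ∫ x, cos (t * x) ∂ν := by
  have hint : Integrable (fun x : ℝ ↦ Complex.exp (t * x * Complex.I)) ν :=
    (integrable_const (1 : ℝ)).mono' (by fun_prop) <| .of_forall fun x ↦ by
      rw [← Complex.ofReal_mul, Complex.norm_exp_ofReal_mul_I]
  rw [charFun_apply_real, ← RCLike.re_eq_complex_re, ← integral_re hint]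
  congr 1 with x
  rw [RCLike.re_eq_complex_re, ← Complex.ofReal_mul, Complex.exp_ofReal_mul_I_re]

lemma exists_setIntegral_sq_pos {ν : Measure ℝ} [IsProbabilityMeasure ν] (hν : ν {0} ≠ 1) :
    ∃ M > 0, 0 < ∫ x in closedBall 0 M, x ^ 2 ∂ν := by
  have hpos : ν {0}ᶜ ≠ 0 := by rwa [Ne, prob_compl_eq_zero_iff (measurableSet_singleton 0)]
  obtain ⟨n, hn⟩ : ∃ n : ℕ, 0 < ν ({0}ᶜ ∩ closedBall 0 n) := by
    by_contra! h
    refine hpos ?_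
    rw [← inter_univ {0}ᶜ, ← iUnion_closedBall_nat 0, inter_iUnion]
    exact measure_iUnion_null fun n ↦ nonpos_iff_eq_zero.1 (h n)
  refine ⟨n + 1, by positivity, ?_⟩
  have hint : IntegrableOn (fun x ↦ x ^ 2) (closedBall 0 ((n : ℝ) + 1)) ν :=
    (by fun_prop : ContinuousOn _ _).integrableOn_compact (isCompact_closedBall _ _)
  rw [setIntegral_pos_iff_support_of_nonneg_ae (.of_forall fun x ↦ sq_nonneg x) hint]
  refine hn.trans_le (measure_mono (inter_subset_inter ?_ (closedBall_subset_closedBall ?_)))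
  · intro x hx
    simpa using hx
  · linarith

lemma exists_mul_sq_le_one_sub_re_charFun {ν : Measure ℝ} [IsProbabilityMeasure ν]
    (hν : ν {0} ≠ 1) :
    ∃ δ > 0, ∃ c > 0, ∀ t : ℝ, |t| ≤ δ → c * t ^ 2 ≤ 1 - (charFun ν t).re := by
  obtain ⟨M, hM, hpos⟩ := exists_setIntegral_sq_pos hν
  refine ⟨π / M, by positivity, 2 / π ^ 2 * ∫ x in closedBall 0 M, x ^ 2 ∂ν, by positivity,
    fun t ht ↦ ?_⟩
  have hint : Integrable (fun x ↦ 1 - cos (t * x)) ν :=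
    (integrable_const 1).sub (integrable_cos_mul ν t)
  have hsq : IntegrableOn (fun x ↦ 2 / π ^ 2 * (t * x) ^ 2) (closedBall 0 M) ν :=
    (by fun_prop : ContinuousOn _ _).integrableOn_compact (isCompact_closedBall _ _)
  calc 2 / π ^ 2 * (∫ x in closedBall 0 M, x ^ 2 ∂ν) * t ^ 2
      = ∫ x in closedBall 0 M, 2 / π ^ 2 * (t * x) ^ 2 ∂ν := by
        simp_rw [mul_pow, integral_const_mul]
        ring
    _ ≤ ∫ x in closedBall 0 M, (1 - cos (t * x)) ∂ν := by
        refine setIntegral_mono_on hsq hint.integrableOn measurableSet_closedBall fun x hx ↦ ?_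
        have htx : |t * x| ≤ π := by
          rw [abs_mul, ← div_mul_cancel₀ π hM.ne']
          gcongr
          simpa using hx
        linarith [cos_le_one_sub_mul_cos_sq htx]
    _ ≤ ∫ x, (1 - cos (t * x)) ∂ν :=
        setIntegral_le_integral hint (.of_forall fun x ↦ sub_nonneg.2 (cos_le_one _))
    _ = 1 - (charFun ν t).re := by
        rw [integral_sub (integrable_const 1) (integrable_cos_mul ν t),
          re_charFun_eq_integral_cos]
        simp

lemma exists_mul_sq_le_one_sub_norm_charFun {μ : Measure ℝ} [IsProbabilityMeasure μ]
    (hμ : ∀ a, μ {a} ≠ 1) :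
    ∃ δ > 0, ∃ c > 0, ∀ t : ℝ, |t| ≤ δ → c * t ^ 2 ≤ 1 - ‖charFun μ t‖ := by
  have : IsProbabilityMeasure (μ.map Neg.neg) :=
    Measure.isProbabilityMeasure_map measurable_neg.aemeasurable
  obtain ⟨δ, hδ, c, hc, h⟩ :=
    exists_mul_sq_le_one_sub_re_charFun (conv_map_neg_singleton_zero_ne_one hμ)
  refine ⟨δ, hδ, c / 2, half_pos hc, fun t ht ↦ ?_⟩
  have hsq := h t ht
  rw [charFun_conv_map_neg, Complex.ofReal_re] at hsq
  nlinarith [norm_charFun_le_one (μ := μ) t, norm_nonneg (charFun μ t)]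

lemma charFun_eq_charFun_map_inner {μ : Measure E} {e : E} (he : ‖e‖ = 1)
    (hμ : ∀ᵐ v ∂μ, v ∈ Submodule.span ℝ {e}) (ζ : E) :
    charFun μ ζ = charFun (μ.map fun v ↦ ⟪e, v⟫) ⟪e, ζ⟫ := by
  rw [charFun_apply, charFun_apply, integral_map (by fun_prop) (by fun_prop)]
  refine integral_congr_ae ?_
  filter_upwards [hμ] with v hv
  nth_rewrite 1 [eq_inner_smul_of_mem_span_singleton he hv]
  rw [real_inner_smul_left, real_inner_comm, RCLike.inner_apply, conj_trivial]
  ring_nf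

lemma map_inner_singleton_ne_one {μ : Measure E} [IsProbabilityMeasure μ] {e : E} (he : ‖e‖ = 1)
    (hμ : ∀ᵐ v ∂μ, v ∈ Submodule.span ℝ {e}) (hdirac : ∀ u, μ {u} ≠ 1) (a : ℝ) :
    (μ.map fun v ↦ ⟪e, v⟫) {a} ≠ 1 := by
  intro h
  have : IsProbabilityMeasure (μ.map fun v ↦ ⟪e, v⟫) :=
    Measure.isProbabilityMeasure_map (by fun_prop)
  have hmap : ∀ᵐ v ∂μ, ⟪e, v⟫ = a :=
    ae_of_ae_map (by fun_prop) ((mem_ae_iff_prob_eq_one (measurableSet_singleton a)).2 h)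
  refine hdirac (a • e) ((mem_ae_iff_prob_eq_one (measurableSet_singleton _)).1 ?_)
  filter_upwards [hμ, hmap] with v hv hva
  rw [mem_singleton_iff, eq_inner_smul_of_mem_span_singleton he hv, hva]

theorem exists_mul_inner_sq_le_one_sub_norm_charFun {μ : Measure E} [IsProbabilityMeasure μ]
    {e : E} (he : ‖e‖ = 1) (hμ : ∀ᵐ v ∂μ, v ∈ Submodule.span ℝ {e}) (hdirac : ∀ u, μ {u} ≠ 1) :
    ∃ δ > 0, ∃ c > 0, ∀ ζ : E, |⟪e, ζ⟫| ≤ δ → c * ⟪e, ζ⟫ ^ 2 ≤ 1 - ‖charFun μ ζ‖ := by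
  have : IsProbabilityMeasure (μ.map fun v ↦ ⟪e, v⟫) :=
    Measure.isProbabilityMeasure_map (by fun_prop)
  obtain ⟨δ, hδ, c, hc, h⟩ :=
    exists_mul_sq_le_one_sub_norm_charFun (map_inner_singleton_ne_one he hμ hdirac)
  refine ⟨δ, hδ, c, hc, fun ζ hζ ↦ ?_⟩
  rw [charFun_eq_charFun_map_inner he hμ]
  exact h _ hζ

end CharFun

section Sphere

lemma dist_normalize_le {E : Type*} [NormedAddCommGroup E] [NormedSpace ℝ E] {x : E}
    (hx : ‖x‖ = 1) {y : E} (hy : y ≠ 0) : dist (‖y‖⁻¹ • y) x ≤ 2 * dist y x := by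
  have hnorm : ‖y‖ ≠ 0 := norm_ne_zero_iff.2 hy
  have hradial : dist (‖y‖⁻¹ • y) y ≤ dist y x := calc
    dist (‖y‖⁻¹ • y) y = ‖(‖y‖⁻¹ - 1) • y‖ := by rw [dist_eq_norm, sub_smul, one_smul]
    _ = |‖x‖ - ‖y‖| := by
      rw [norm_smul, norm_eq_abs, ← abs_norm y, ← abs_mul, abs_norm, sub_mul,
        inv_mul_cancel₀ hnorm, one_mul, hx]
    _ ≤ dist y x := by
      rw [dist_comm, dist_eq_norm]
      exact abs_norm_sub_norm_le x y
  linarith [dist_triangle (‖y‖⁻¹ • y) y x]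

variable {E : Type*} [NormedAddCommGroup E] [NormedSpace ℝ E]

lemma ball_subset_Ioo_smul_ball (x : sphere (0 : E) 1) {ε : ℝ} (hε : ε ≤ 2) :
    ball ((1 - ε / 4) • (x : E)) (ε / 4) ⊆ Ioo (0 : ℝ) 1 • ((↑) '' ball x ε : Set E) := by
  intro y hy
  have hx : ‖(x : E)‖ = 1 := norm_eq_of_mem_sphere x
  have hε4 : 0 < ε / 4 := pos_of_mem_ball hy
  have hcenter : ‖(1 - ε / 4) • (x : E)‖ = 1 - ε / 4 := by
    rw [norm_smul, hx, mul_one, norm_of_nonneg (by linarith)]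
  have hcenterx : dist ((1 - ε / 4) • (x : E)) x = ε / 4 := by
    rw [dist_eq_norm, sub_smul, one_smul, sub_sub_cancel_left, norm_neg, norm_smul, hx, mul_one,
      norm_of_nonneg hε4.le]
  rw [mem_ball] at hy
  have hyx : dist y x < ε / 2 := by linarith [dist_triangle y ((1 - ε / 4) • (x : E)) x]
  rw [dist_eq_norm] at hy
  have hy1 : ‖y‖ < 1 := by
    linarith [norm_le_norm_add_norm_sub' y ((1 - ε / 4) • (x : E))]
  have hy0 : 0 < ‖y‖ := by
    linarith [norm_le_norm_add_norm_sub' ((1 - ε / 4) • (x : E)) y,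
      norm_sub_rev y ((1 - ε / 4) • (x : E))]
  have hysphere : ‖y‖⁻¹ • y ∈ sphere (0 : E) 1 := by
    rw [mem_sphere_zero_iff_norm, norm_smul, norm_inv, norm_norm, inv_mul_cancel₀ hy0.ne']
  refine ⟨‖y‖, ⟨hy0, hy1⟩, _, ⟨⟨_, hysphere⟩, ?_, rfl⟩, smul_inv_smul₀ hy0.ne' y⟩
  rw [mem_ball, Subtype.dist_eq]
  linarith [dist_normalize_le hx (norm_pos_iff.1 hy0)]

lemma disjoint_smul_ball_of_norm_lt_one {S : Set E} (hS : ∀ y ∈ S, ‖y‖ < 1) {x : E}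
    (hx : ‖x‖ = 1) {ε : ℝ} (hε : ε < 2) :
    Disjoint ((1 - ε / 2) • S) (ball ((1 - ε / 4) • x) (ε / 4)) := by
  rw [disjoint_left]
  rintro _ ⟨y, hy, rfl⟩ hball
  have hinner : ‖(1 - ε / 2) • y‖ < 1 - ε / 2 := by
    rw [norm_smul, norm_of_nonneg (by linarith)]
    exact mul_lt_of_lt_one_right (by linarith) (hS y hy)
  have hcenter : ‖(1 - ε / 4) • x‖ = 1 - ε / 4 := by
    rw [norm_smul, hx, mul_one, norm_of_nonneg (by linarith)]
  rw [mem_ball', dist_eq_norm] at hball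
  linarith [norm_le_norm_add_norm_sub' ((1 - ε / 4) • x) ((1 - ε / 2) • y)]

/-- The truncated cone `C` over a spherical ball of radius `ε` contains its dilate
`(1 - ε / 2) • C`; by Bernoulli's inequality the shell between the two has volume at most `ε / 2`
times the surface measure of the spherical ball, and it contains a ball of radius `ε / 4`. -/
theorem pow_mul_measureReal_ball_le_mul_toSphere_ball [MeasurableSpace E] [BorelSpace E]
    [FiniteDimensional ℝ E] (μ : Measure E) [μ.IsAddHaarMeasure] (x : sphere (0 : E) 1) {ε : ℝ}
    (hε0 : 0 < ε) (hε2 : ε < 2) :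
    (ε / 4) ^ finrank ℝ E * μ.real (ball 0 1) ≤ ε / 2 * μ.toSphere.real (ball x ε) := by
  set C : Set E := Ioo (0 : ℝ) 1 • ((↑) '' ball x ε) with hC
  set n := finrank ℝ E
  have hδ : 0 < 1 - ε / 2 := by linarith
  have hnorm : ∀ y ∈ C, ‖y‖ < 1 := by
    rintro _ ⟨t, ht, _, ⟨σ, -, rfl⟩, rfl⟩
    simpa [norm_smul, abs_of_pos ht.1] using ht.2
  have hCfin : μ C ≠ ∞ := measure_ne_top_of_subset
    (fun y hy ↦ mem_ball_zero_iff.2 (hnorm y hy)) measure_ball_lt_top.ne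
  have hdilate : (1 - ε / 2) • C ⊆ C := by
    rintro _ ⟨_, ⟨t, ht, y, hy, rfl⟩, rfl⟩
    exact ⟨(1 - ε / 2) * t, ⟨mul_pos hδ ht.1, by nlinarith [ht.1, ht.2]⟩, y, hy, mul_smul _ _ _⟩
  have hdisj : Disjoint ((1 - ε / 2) • C) (ball ((1 - ε / 4) • (x : E)) (ε / 4)) :=
    disjoint_smul_ball_of_norm_lt_one hnorm (norm_eq_of_mem_sphere x) hε2
  have hshell : (1 - ε / 2) ^ n * μ.real C + (ε / 4) ^ n * μ.real (ball 0 1) ≤ μ.real C := calc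
    _ = μ.real ((1 - ε / 2) • C) + μ.real (ball ((1 - ε / 4) • (x : E)) (ε / 4)) := by
      simp only [measureReal_def, μ.addHaar_ball_of_pos _ (by linarith : 0 < ε / 4),
        μ.addHaar_smul_of_nonneg hδ.le, ENNReal.toReal_mul,
        ENNReal.toReal_ofReal (pow_nonneg hδ.le n),
        ENNReal.toReal_ofReal (by positivity : 0 ≤ (ε / 4) ^ n), n]
    _ = μ.real ((1 - ε / 2) • C ∪ ball ((1 - ε / 4) • (x : E)) (ε / 4)) :=
      (measureReal_union hdisj measurableSet_ball
        (measure_ne_top_of_subset hdilate hCfin)).symm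
    _ ≤ μ.real C :=
      measureReal_mono (union_subset hdilate (ball_subset_Ioo_smul_ball x hε2.le)) hCfin
  have hbernoulli : 1 + n * (-(ε / 2)) ≤ (1 - ε / 2) ^ n := by
    simpa [← sub_eq_add_neg] using one_add_mul_le_pow (by linarith : -2 ≤ -(ε / 2)) n
  have hcone : μ.toSphere.real (ball x ε) = n * μ.real C := by
    simp [measureReal_def, μ.toSphere_apply' measurableSet_ball, hC, n]
  rw [hcone]
  linarith [mul_le_mul_of_nonneg_right hbernoulli (measureReal_nonneg (μ := μ) (s := C))]

end Sphere

section Cap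

variable {E : Type*} [NormedAddCommGroup E] [InnerProductSpace ℝ E]

lemma norm_sub_sq_eq_of_norm_eq_one {x y : E} (hx : ‖x‖ = 1) (hy : ‖y‖ = 1) :
    ‖x - y‖ ^ 2 = 2 * (1 - ⟪x, y⟫) := by
  rw [norm_sub_sq_real, hx, hy]
  ring

lemma norm_sub_sq_eq_two_sub_two_mul_cos_angle {x y : E} (hx : ‖x‖ = 1) (hy : ‖y‖ = 1) :
    ‖x - y‖ ^ 2 = 2 - 2 * cos (angle x y) := by
  rw [norm_sub_sq_eq_of_norm_eq_one hx hy, cos_angle, hx, hy]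
  ring

lemma norm_sub_le_angle {x y : E} (hx : ‖x‖ = 1) (hy : ‖y‖ = 1) : ‖x - y‖ ≤ angle x y := by
  refine le_of_sq_le_sq ?_ (angle_nonneg x y)
  rw [norm_sub_sq_eq_two_sub_two_mul_cos_angle hx hy]
  linarith [one_sub_sq_div_two_le_cos (x := angle x y)]

lemma angle_le_pi_div_two_mul_norm_sub {x y : E} (hx : ‖x‖ = 1) (hy : ‖y‖ = 1) :
    angle x y ≤ π / 2 * ‖x - y‖ := by
  have hcos : cos (angle x y) ≤ 1 - 2 / π ^ 2 * angle x y ^ 2 :=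
    cos_le_one_sub_mul_cos_sq (by rw [abs_of_nonneg (angle_nonneg x y)]; exact angle_le_pi x y)
  refine le_of_sq_le_sq ?_ (by positivity)
  calc angle x y ^ 2 = π ^ 2 / 2 * (2 / π ^ 2 * angle x y ^ 2) := by field_simp
    _ ≤ π ^ 2 / 2 * (1 - cos (angle x y)) := by gcongr; linarith
    _ = (π / 2 * ‖x - y‖) ^ 2 := by
      rw [mul_pow, norm_sub_sq_eq_two_sub_two_mul_cos_angle hx hy]
      ring

lemma exists_norm_eq_one_inner_eq_neg_norm [Nontrivial E] (p : E) :
    ∃ η : E, ‖η‖ = 1 ∧ ⟪p, η⟫ = -‖p‖ := by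
  rcases eq_or_ne p 0 with rfl | hp
  · obtain ⟨η, hη⟩ := exists_norm_eq E zero_le_one
    exact ⟨η, hη, by simp⟩
  · have hnorm : ‖p‖ ≠ 0 := norm_ne_zero_iff.2 hp
    refine ⟨-(‖p‖⁻¹ • p), ?_, ?_⟩
    · rw [norm_neg, norm_smul, norm_inv, norm_norm, inv_mul_cancel₀ hnorm]
    · rw [inner_neg_right, real_inner_smul_right, real_inner_self_eq_norm_mul_norm,
        inv_mul_cancel_left₀ hnorm]

lemma exists_orthogonal_inner_eq_neg_norm (hE : 1 < finrank ℝ E) {ω p : E} (hp : ⟪ω, p⟫ = 0) :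
    ∃ η : E, ‖η‖ = 1 ∧ ⟪ω, η⟫ = 0 ∧ ⟪p, η⟫ = -‖p‖ := by
  have : FiniteDimensional ℝ E := Module.finite_of_finrank_pos (by lia)
  have : Nontrivial (ℝ ∙ ω)ᗮ := by
    rw [← Module.finrank_pos_iff (R := ℝ)]
    have := (ℝ ∙ ω).finrank_add_finrank_orthogonal
    have := finrank_span_le_card (R := ℝ) {ω}
    rw [toFinset_singleton, Finset.card_singleton] at this
    lia
  obtain ⟨η, hη, hpη⟩ := exists_norm_eq_one_inner_eq_neg_norm
    (⟨p, Submodule.mem_orthogonal_singleton_iff_inner_right.2 hp⟩ : (ℝ ∙ ω)ᗮ)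
  exact ⟨η, hη, Submodule.mem_orthogonal_singleton_iff_inner_right.1 η.2, hpη⟩

lemma exists_norm_eq_one_tilt (hE : 1 < finrank ℝ E) {ω p : E} (hω : ‖ω‖ = 1) (hp : ⟪ω, p⟫ = 0)
    {τ : ℝ} (hτ0 : 0 ≤ τ) (hτ1 : τ ≤ 1) :
    ∃ σ : E, ‖σ‖ = 1 ∧ τ ≤ ‖ω - σ‖ ∧ ‖ω - σ‖ ≤ 3 / 2 * τ ∧ ⟪p, σ⟫ = -(τ * ‖p‖) := by
  obtain ⟨η, hη, hωη, hpη⟩ := exists_orthogonal_inner_eq_neg_norm hE hp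
  have hτsq : 0 ≤ 1 - τ ^ 2 := by nlinarith
  set κ := √(1 - τ ^ 2)
  have hκ0 : 0 ≤ κ := sqrt_nonneg _
  have hκ : κ ^ 2 = 1 - τ ^ 2 := sq_sqrt hτsq
  have hσ : ‖κ • ω + τ • η‖ = 1 := by
    rw [← pow_eq_one_iff_of_nonneg (norm_nonneg _) two_ne_zero, norm_add_sq_real, norm_smul,
      norm_smul, real_inner_smul_left, real_inner_smul_right, hω, hη, hωη, norm_of_nonneg hκ0,
      norm_of_nonneg hτ0]
    linarith
  have hdist : ‖ω - (κ • ω + τ • η)‖ ^ 2 = 2 * (1 - κ) := by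
    rw [norm_sub_sq_eq_of_norm_eq_one hω hσ, inner_add_right, real_inner_smul_right,
      real_inner_smul_right, hωη, real_inner_self_eq_norm_sq, hω]
    ring
  refine ⟨κ • ω + τ • η, hσ, ?_, ?_, ?_⟩
  · refine le_of_sq_le_sq ?_ (norm_nonneg _)
    nlinarith
  · refine le_of_sq_le_sq ?_ (by positivity)
    nlinarith
  · rw [inner_add_right, real_inner_smul_right, real_inner_smul_right, real_inner_comm, hp, hpη]
    ring

lemma inner_sub_eq_inner_orthogonal_add {ω σ : E} (hω : ‖ω‖ = 1) (hσ : ‖σ‖ = 1) (e : E) :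
    ⟪e, ω - σ⟫ = -⟪e - ⟪e, ω⟫ • ω, σ⟫ + ⟪e, ω⟫ * ‖ω - σ‖ ^ 2 / 2 := by
  rw [norm_sub_sq_eq_of_norm_eq_one hω hσ, inner_sub_left, inner_sub_right, real_inner_smul_left]
  ring

lemma exists_cap_abs_inner_sub_mem_Icc (hE : 1 < finrank ℝ E) {ω : E} (hω : ‖ω‖ = 1) (e : E)
    {τ : ℝ} (hτ0 : 0 ≤ τ) (hτ1 : τ ≤ 1) :
    ∃ σ₀ : E, ‖σ₀‖ = 1 ∧ ∀ σ : E, ‖σ‖ = 1 → ‖σ - σ₀‖ ≤ τ / 2 →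
      ‖ω - σ‖ ∈ Icc (τ / 2) (2 * τ) ∧
      |⟪e, ω - σ⟫| ∈ Icc ((τ * ‖e - ⟪e, ω⟫ • ω‖ + τ ^ 2 * |⟪e, ω⟫|) / 8)
        (2 * (τ * ‖e - ⟪e, ω⟫ • ω‖ + τ ^ 2 * |⟪e, ω⟫|)) := by
  wlog he : 0 ≤ ⟪e, ω⟫ generalizing e
  · obtain ⟨σ₀, hσ₀, h⟩ := this (-e) (by rw [inner_neg_left]; linarith)
    refine ⟨σ₀, hσ₀, fun σ hσ hσσ₀ ↦ ?_⟩
    simpa [inner_neg_left, neg_add_eq_sub, norm_sub_rev] using h σ hσ hσσ₀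
  -- Tilting against `p` gives both terms of `inner_sub_eq_inner_orthogonal_add` the same sign.
  set p := e - ⟪e, ω⟫ • ω with hp_def
  have hp : ⟪ω, p⟫ = 0 := by
    rw [hp_def, inner_sub_right, real_inner_smul_right, real_inner_self_eq_norm_sq, hω,
      real_inner_comm]
    ring
  obtain ⟨σ₀, hσ₀, hlow, hup, hpσ₀⟩ := exists_norm_eq_one_tilt hE hω hp hτ0 hτ1
  refine ⟨σ₀, hσ₀, fun σ hσ hσσ₀ ↦ ?_⟩
  have hdist_low : τ / 2 ≤ ‖ω - σ‖ := by linarith [norm_sub_le_norm_sub_add_norm_sub ω σ σ₀]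
  have hdist_up : ‖ω - σ‖ ≤ 2 * τ := by
    linarith [norm_sub_le_norm_sub_add_norm_sub ω σ₀ σ, norm_sub_rev σ σ₀]
  have htransverse : |⟪p, σ⟫ + τ * ‖p‖| ≤ τ * ‖p‖ / 2 := calc
    |⟪p, σ⟫ + τ * ‖p‖| = |⟪p, σ - σ₀⟫| := by rw [inner_sub_right, hpσ₀, sub_neg_eq_add]
    _ ≤ ‖p‖ * ‖σ - σ₀‖ := abs_real_inner_le_norm _ _
    _ ≤ ‖p‖ * (τ / 2) := by gcongr
    _ = τ * ‖p‖ / 2 := by ring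
  have hinner := inner_sub_eq_inner_orthogonal_add hω hσ e
  rw [← hp_def] at hinner
  obtain ⟨htlow, htup⟩ := abs_le.1 htransverse
  have hlong_low : ⟪e, ω⟫ * (τ / 2) ^ 2 ≤ ⟪e, ω⟫ * ‖ω - σ‖ ^ 2 := by gcongr
  have hlong_up : ⟪e, ω⟫ * ‖ω - σ‖ ^ 2 ≤ ⟪e, ω⟫ * (2 * τ) ^ 2 := by gcongr
  have hnonneg : 0 ≤ τ * ‖p‖ ∧ 0 ≤ ⟪e, ω⟫ * τ ^ 2 := by constructor <;> positivity
  refine ⟨⟨hdist_low, hdist_up⟩, ?_⟩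
  rw [abs_of_nonneg he, abs_of_nonneg (by linarith [hnonneg.1, hnonneg.2] : 0 ≤ ⟪e, ω - σ⟫)]
  constructor <;> linarith [hnonneg.1, hnonneg.2]

end Cap

section Kernel

lemma exists_forall_mul_rpow_neg_le_of_tendsto {f : ℝ → ℝ} {p K : ℝ} (hK : 0 < K)
    (hf : Tendsto (fun θ ↦ f θ * θ ^ p) (𝓝[>] 0) (𝓝 K)) :
    ∃ θ₀ > 0, ∀ θ, 0 < θ → θ < θ₀ → K / 2 * θ ^ (-p) ≤ f θ := by
  obtain ⟨θ₀, hθ₀, h⟩ :=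
    mem_nhdsGT_iff_exists_Ioo_subset.1 (hf.eventually_const_lt (half_lt_self hK))
  refine ⟨θ₀, hθ₀, fun θ hθ hθlt ↦ ?_⟩
  rw [rpow_neg hθ.le, ← div_eq_mul_inv, div_le_iff₀ (rpow_pos_of_pos hθ p)]
  exact (h ⟨hθ, hθlt⟩).le

lemma min_rpow_le_rpow {x y z : ℝ} (hx : 0 < x) (hxy : x ≤ y) (hyz : y ≤ z) (r : ℝ) :
    min (x ^ r) (z ^ r) ≤ y ^ r := by
  rcases le_total 0 r with hr | hr
  · exact (min_le_left _ _).trans (rpow_le_rpow hx.le hxy hr)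
  · exact (min_le_right _ _).trans (rpow_le_rpow_of_nonpos (hx.trans_le hxy) hyz hr)

lemma rpow_neg_mul_pow_div_eq {τ A Q : ℝ} (hτ : 0 < τ) (hA : 0 < A) (hτQ : τ ^ 2 * Q = A)
    (n : ℕ) (s : ℝ) : τ ^ (-((n : ℝ) - 1 + 2 * s)) * (τ ^ n / τ) = A ^ (-s) * Q ^ s := by
  have hQ : 0 < Q := pos_of_mul_pos_right (hτQ ▸ hA) (sq_nonneg τ)
  have hA_rpow : A ^ (-s) = τ ^ (-(2 * s)) * Q ^ (-s) := by
    rw [← hτQ, mul_rpow (sq_nonneg τ) hQ.le, ← rpow_natCast_mul hτ.le, mul_neg, Nat.cast_two]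
  calc τ ^ (-((n : ℝ) - 1 + 2 * s)) * (τ ^ n / τ)
      = τ ^ (-((n : ℝ) - 1 + 2 * s)) * τ ^ ((n : ℝ) - 1) := by
        rw [rpow_sub_one hτ.ne', rpow_natCast]
    _ = τ ^ (-(2 * s)) := by
        rw [← rpow_add hτ]
        congr 1
        ring
    _ = A ^ (-s) * Q ^ s := by
        rw [hA_rpow, mul_assoc, ← rpow_add hQ, neg_add_cancel, rpow_zero, mul_one]

lemma min_rpow_mul_pow_div_eq {τ A Q : ℝ} (hτ : 0 < τ) (hA : 0 < A) (hτQ : τ ^ 2 * Q = A)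
    (n : ℕ) {p s : ℝ} (hp : p = (n : ℝ) - 1 + 2 * s) :
    min ((τ / 2) ^ (-p)) ((4 * τ) ^ (-p)) * ((τ / 8) ^ n / (τ / 4)) =
      min ((1 / 2) ^ (-p)) (4 ^ (-p)) * (4 / 8 ^ n) * (A ^ (-s) * Q ^ s) := by
  have hmin : min ((τ / 2) ^ (-p)) ((4 * τ) ^ (-p)) =
      min ((1 / 2) ^ (-p)) (4 ^ (-p)) * τ ^ (-p) := by
    rw [min_mul_of_nonneg _ _ (by positivity), ← mul_rpow (by norm_num) hτ.le,
      ← mul_rpow (by norm_num) hτ.le, one_div_mul_eq_div]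
  rw [hmin, ← rpow_neg_mul_pow_div_eq hτ hA hτQ n s, ← hp, div_pow]
  ring

lemma exists_tilt_sq_mul_eq_sq {a θ₀ Q : ℝ} (ha0 : 0 < a) (ha1 : a ≤ 1) (hθ₀ : 0 < θ₀)
    (hQ : 1 + (4 / θ₀) ^ 2 ≤ Q) : ∃ τ > 0, τ ≤ 1 ∧ 4 * τ < θ₀ ∧ τ ^ 2 * Q = a ^ 2 := by
  have hQ1 : 1 ≤ Q := by linarith [sq_nonneg (4 / θ₀)]
  have hsqrt : 0 < √Q := sqrt_pos.2 (by linarith)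
  refine ⟨a / √Q, by positivity, ?_, ?_, ?_⟩
  · exact (div_le_one hsqrt).2 (ha1.trans (one_le_sqrt.2 hQ1))
  · have hlt : 4 / θ₀ < √Q := lt_sqrt_of_sq_lt (by linarith)
    rw [div_lt_iff₀ hθ₀] at hlt
    rw [← mul_div_assoc, div_lt_iff₀ hsqrt]
    linarith
  · rw [div_pow, sq_sqrt (by linarith), div_mul_cancel₀ _ (by linarith)]

end Kernel

section Dissipation

variable {E : Type*} [NormedAddCommGroup E] [InnerProductSpace ℝ E]

/-- For a unit vector `e`, the squared length of the part of `ξ` orthogonal to `e` plus the length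
of the part along `e`; this is `|ξ₁|² + |ξ₂|² + |ξ₃|` when `e` is the third coordinate vector. -/
def anisotropicWeight (e ξ : E) : ℝ := ‖ξ‖ ^ 2 - ⟪e, ξ⟫ ^ 2 + |⟪e, ξ⟫|

lemma norm_le_anisotropicWeight {e ξ : E} (he : ‖e‖ = 1) (hξ : 1 ≤ ‖ξ‖) :
    ‖ξ‖ ≤ anisotropicWeight e ξ := by
  have hle : |⟪e, ξ⟫| ≤ ‖ξ‖ := by simpa [he] using abs_real_inner_le_norm e ξ
  rw [anisotropicWeight, ← sq_abs ⟪e, ξ⟫]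
  nlinarith [abs_nonneg ⟪e, ξ⟫]

lemma norm_sub_inner_smul_sq {e ω : E} (he : ‖e‖ = 1) (hω : ‖ω‖ = 1) :
    ‖e - ⟪e, ω⟫ • ω‖ ^ 2 = 1 - ⟪e, ω⟫ ^ 2 := by
  rw [norm_sub_sq_real, real_inner_smul_right, norm_smul, mul_pow, he, hω, norm_eq_abs, sq_abs]
  ring

lemma mul_add_mem_Icc_of_sq_mul_anisotropicWeight {e ω : E} (he : ‖e‖ = 1) (hω : ‖ω‖ = 1)
    {r τ a : ℝ} (hr : 0 ≤ r) (hτ : 0 ≤ τ) (ha0 : 0 ≤ a) (ha1 : a ≤ 1)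
    (hτa : τ ^ 2 * anisotropicWeight e (r • ω) = a ^ 2) :
    r * (τ * ‖e - ⟪e, ω⟫ • ω‖ + τ ^ 2 * |⟪e, ω⟫|) ∈ Icc (a ^ 2) (2 * a) := by
  have hA : 0 ≤ r * τ * ‖e - ⟪e, ω⟫ • ω‖ := by positivity
  have hB : 0 ≤ r * τ ^ 2 * |⟪e, ω⟫| := by positivity
  have hAB : (r * τ * ‖e - ⟪e, ω⟫ • ω‖) ^ 2 + r * τ ^ 2 * |⟪e, ω⟫| = a ^ 2 := by
    rw [← hτa, anisotropicWeight, mul_pow, norm_sub_inner_smul_sq he hω, norm_smul,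
      real_inner_smul_right, hω, norm_of_nonneg hr, abs_mul, abs_of_nonneg hr]
    ring
  have hAa : r * τ * ‖e - ⟪e, ω⟫ • ω‖ ≤ a := le_of_sq_le_sq (by linarith) ha0
  constructor <;> nlinarith

lemma exists_cap_abs_inner_mem_Icc (hE : 1 < finrank ℝ E) {e ξ : E} (he : ‖e‖ = 1) (hξ : ξ ≠ 0)
    {τ a : ℝ} (hτ0 : 0 ≤ τ) (hτ1 : τ ≤ 1) (ha0 : 0 ≤ a) (ha1 : a ≤ 1)
    (hτa : τ ^ 2 * anisotropicWeight e ξ = a ^ 2) :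
    ∃ σ₀ : sphere (0 : E) 1, ∀ σ ∈ ball σ₀ (τ / 2),
      angle ξ (σ : E) ∈ Icc (τ / 2) (4 * τ) ∧
      |⟪e, (1 / 2 : ℝ) • ξ - (‖ξ‖ / 2) • (σ : E)⟫| ∈ Icc (a ^ 2 / 16) (2 * a) := by
  have hnorm : 0 < ‖ξ‖ := norm_pos_iff.2 hξ
  set ω := ‖ξ‖⁻¹ • ξ
  have hω : ‖ω‖ = 1 := by rw [norm_smul, norm_inv, norm_norm, inv_mul_cancel₀ hnorm.ne']
  have hξω : ξ = ‖ξ‖ • ω := (smul_inv_smul₀ hnorm.ne' ξ).symm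
  obtain ⟨σ₀, hσ₀, hcap⟩ := exists_cap_abs_inner_sub_mem_Icc hE hω e hτ0 hτ1
  refine ⟨⟨σ₀, mem_sphere_zero_iff_norm.2 hσ₀⟩, fun σ hσ ↦ ?_⟩
  have hσnorm : ‖(σ : E)‖ = 1 := norm_eq_of_mem_sphere σ
  obtain ⟨⟨hdist_low, hdist_up⟩, hinner_low, hinner_up⟩ :=
    hcap σ hσnorm (by rw [← dist_eq_norm]; exact (mem_ball.1 hσ).le)
  refine ⟨?_, ?_⟩
  · rw [← angle_smul_left_of_pos ξ (σ : E) (inv_pos.2 hnorm)]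
    refine ⟨hdist_low.trans (norm_sub_le_angle hω hσnorm), ?_⟩
    calc angle ω (σ : E) ≤ π / 2 * ‖ω - σ‖ := angle_le_pi_div_two_mul_norm_sub hω hσnorm
      _ ≤ 4 / 2 * (2 * τ) := by gcongr; exact pi_le_four
      _ = 4 * τ := by ring
  · have hhalf : (‖ξ‖ / 2) • ω = (1 / 2 : ℝ) • ξ := by
      rw [smul_smul]
      congr 1
      field_simp
    have hminus : |⟪e, (1 / 2 : ℝ) • ξ - (‖ξ‖ / 2) • (σ : E)⟫| = ‖ξ‖ / 2 * |⟪e, ω - σ⟫| := by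
      rw [← hhalf, ← smul_sub, real_inner_smul_right, abs_mul, abs_of_pos (half_pos hnorm)]
    obtain ⟨hsize_low, hsize_up⟩ :=
      mul_add_mem_Icc_of_sq_mul_anisotropicWeight he hω hnorm.le hτ0 ha0 ha1 (hξω ▸ hτa)
    rw [hminus]
    constructor <;> nlinarith

variable [FiniteDimensional ℝ E] [MeasurableSpace E] [BorelSpace E]

/-- The factor `∫ b(ξ·σ/|ξ|) (1 - |ψ(ξ⁻)|) dσ` by which the collision operator with kernel `b`
damps the frequency `ξ`, where `ξ⁻ = (ξ - |ξ|σ)/2`. The value in `[0, ∞]` allows divergence. -/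
def dissipation (b : ℝ → ℝ) (ψ : E → ℂ) (ξ : E) : ℝ≥0∞ :=
  ∫⁻ σ, ENNReal.ofReal
    (b (⟪ξ, (σ : E)⟫ / ‖ξ‖) * (1 - ‖ψ ((1 / 2 : ℝ) • ξ - (‖ξ‖ / 2) • (σ : E))‖))
    ∂(volume : Measure E).toSphere

theorem ofReal_le_dissipation (hE : 1 < finrank ℝ E) {b : ℝ → ℝ} (hb_nonneg : ∀ x, 0 ≤ b x)
    {κ p θ₀ : ℝ} (hb : ∀ θ, 0 < θ → θ < θ₀ → κ * θ ^ (-p) ≤ b (cos θ)) (hκ : 0 ≤ κ)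
    {ψ : E → ℂ} {e : E} (he : ‖e‖ = 1) {c δ : ℝ} (hc : 0 ≤ c)
    (hψ : ∀ ζ, |⟪e, ζ⟫| ≤ δ → c * ⟪e, ζ⟫ ^ 2 ≤ 1 - ‖ψ ζ‖)
    {ξ : E} (hξ : ξ ≠ 0) {τ a : ℝ} (hτ0 : 0 < τ) (hτ1 : τ ≤ 1) (hτθ₀ : 4 * τ < θ₀) (ha0 : 0 ≤ a)
    (ha1 : a ≤ 1) (haδ : 2 * a ≤ δ) (hτa : τ ^ 2 * anisotropicWeight e ξ = a ^ 2) :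
    ENNReal.ofReal (κ * min ((τ / 2) ^ (-p)) ((4 * τ) ^ (-p)) * (c * (a ^ 2 / 16) ^ 2) *
      ((τ / 8) ^ finrank ℝ E / (τ / 4) * volume.real (ball (0 : E) 1))) ≤ dissipation b ψ ξ := by
  obtain ⟨σ₀, hσ₀⟩ := exists_cap_abs_inner_mem_Icc hE he hξ hτ0.le hτ1 ha0 ha1 hτa
  set m := κ * min ((τ / 2) ^ (-p)) ((4 * τ) ^ (-p)) * (c * (a ^ 2 / 16) ^ 2)
  have hm : 0 ≤ m := by positivity
  have hball : (τ / 8) ^ finrank ℝ E / (τ / 4) * volume.real (ball (0 : E) 1) ≤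
      (volume : Measure E).toSphere.real (ball σ₀ (τ / 2)) := by
    have h := pow_mul_measureReal_ball_le_mul_toSphere_ball volume σ₀ (half_pos hτ0) (by linarith)
    rw [show τ / 2 / 4 = τ / 8 by ring, show τ / 2 / 2 = τ / 4 by ring] at h
    rwa [div_mul_eq_mul_div, div_le_iff₀' (by positivity)]
  have hintegrand : ∀ σ ∈ ball σ₀ (τ / 2), m ≤
      b (⟪ξ, (σ : E)⟫ / ‖ξ‖) * (1 - ‖ψ ((1 / 2 : ℝ) • ξ - (‖ξ‖ / 2) • (σ : E))‖) := by
    intro σ hσ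
    obtain ⟨⟨hangle_low, hangle_up⟩, hinner_low, hinner_up⟩ := hσ₀ σ hσ
    have hcos : ⟪ξ, (σ : E)⟫ / ‖ξ‖ = cos (angle ξ (σ : E)) := by
      rw [cos_angle, norm_eq_of_mem_sphere σ, mul_one]
    refine mul_le_mul ?_ ((mul_le_mul_of_nonneg_left ?_ hc).trans
      (hψ _ (hinner_up.trans haδ))) (by positivity) (hb_nonneg _)
    · rw [hcos]
      exact (mul_le_mul_of_nonneg_left
        (min_rpow_le_rpow (half_pos hτ0) hangle_low hangle_up _) hκ).trans
        (hb _ (by linarith) (by linarith))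
    · rw [← sq_abs ⟪e, _⟫]
      gcongr
  calc _ ≤ ENNReal.ofReal (m * (volume : Measure E).toSphere.real (ball σ₀ (τ / 2))) := by gcongr
    _ = ENNReal.ofReal m * (volume : Measure E).toSphere (ball σ₀ (τ / 2)) := by
      rw [ENNReal.ofReal_mul hm, ofReal_measureReal]
    _ = ∫⁻ _ in ball σ₀ (τ / 2), ENNReal.ofReal m ∂(volume : Measure E).toSphere :=
      (setLIntegral_const _ _).symm
    _ ≤ ∫⁻ σ in ball σ₀ (τ / 2), _ ∂(volume : Measure E).toSphere :=
      setLIntegral_mono' measurableSet_ball fun σ hσ ↦ ENNReal.ofReal_le_ofReal (hintegrand σ hσ)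
    _ ≤ dissipation b ψ ξ := setLIntegral_le_lintegral _ _

theorem exists_mul_anisotropicWeight_rpow_le_dissipation (hE : 1 < finrank ℝ E) {s K : ℝ}
    (hK : 0 < K) {b : ℝ → ℝ} (hb_nonneg : ∀ x, 0 ≤ b x)
    (hb : Tendsto (fun θ ↦ b (cos θ) * θ ^ ((finrank ℝ E : ℝ) - 1 + 2 * s)) (𝓝[>] 0) (𝓝 K))
    {ψ : E → ℂ} {e : E} (he : ‖e‖ = 1) {c₀ δ : ℝ} (hc₀ : 0 < c₀) (hδ : 0 < δ)
    (hψ : ∀ ζ, |⟪e, ζ⟫| ≤ δ → c₀ * ⟪e, ζ⟫ ^ 2 ≤ 1 - ‖ψ ζ‖) :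
    ∃ R > 0, ∃ c > 0, ∀ ξ, R ≤ ‖ξ‖ →
      ENNReal.ofReal (c * anisotropicWeight e ξ ^ s) ≤ dissipation b ψ ξ := by
  obtain ⟨θ₀, hθ₀, hbθ⟩ := exists_forall_mul_rpow_neg_le_of_tendsto hK hb
  have : Nontrivial E := Module.nontrivial_of_finrank_pos (R := ℝ) (by lia)
  have hvol : 0 < volume.real (ball (0 : E) 1) :=
    ENNReal.toReal_pos (measure_ball_pos _ _ one_pos).ne' measure_ball_lt_top.ne
  set p := (finrank ℝ E : ℝ) - 1 + 2 * s with hp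
  set a := min 1 (δ / 2)
  have ha0 : 0 < a := by positivity
  have ha1 : a ≤ 1 := min_le_left _ _
  have haδ : 2 * a ≤ δ := by linarith [min_le_right 1 (δ / 2)]
  refine ⟨1 + (4 / θ₀) ^ 2, by positivity,
    K / 2 * (c₀ * (a ^ 2 / 16) ^ 2) * volume.real (ball (0 : E) 1) *
      (min ((1 / 2) ^ (-p)) (4 ^ (-p)) * (4 / 8 ^ finrank ℝ E) * (a ^ 2) ^ (-s)),
    by positivity, fun ξ hξ ↦ ?_⟩
  have hξ1 : 1 ≤ ‖ξ‖ := by linarith [sq_nonneg (4 / θ₀)]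
  obtain ⟨τ, hτ0, hτ1, hτθ₀, hτa⟩ :=
    exists_tilt_sq_mul_eq_sq ha0 ha1 hθ₀ (hξ.trans (norm_le_anisotropicWeight he hξ1))
  have hscale := min_rpow_mul_pow_div_eq hτ0 (pow_pos ha0 2) hτa (finrank ℝ E) hp
  refine le_of_eq_of_le (congrArg ENNReal.ofReal ?_)
    (ofReal_le_dissipation hE hb_nonneg hbθ (half_pos hK).le he hc₀.le hψ
      (norm_pos_iff.1 (by linarith)) hτ0 hτ1 hτθ₀ ha0.le ha1 haδ hτa)
  linear_combination -(K / 2 * (c₀ * (a ^ 2 / 16) ^ 2) * volume.real (ball (0 : E) 1)) * hscale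

theorem anisotropic_degenerate_coercivity_general (hE : 1 < finrank ℝ E) {s K : ℝ} (hK : 0 < K)
    {b : ℝ → ℝ} (hb_nonneg : ∀ x, 0 ≤ b x)
    (hb : Tendsto (fun θ ↦ b (cos θ) * θ ^ ((finrank ℝ E : ℝ) - 1 + 2 * s)) (𝓝[>] 0) (𝓝 K))
    {μ : Measure E} [IsProbabilityMeasure μ] {e : E} (he : ‖e‖ = 1)
    (hline : ∀ᵐ v ∂μ, v ∈ Submodule.span ℝ {e}) (hdirac : ∀ u, μ {u} ≠ 1) :
    ∃ R > 0, ∃ c > 0, ∀ h : E → ℂ,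
      ENNReal.ofReal c * (∫⁻ ξ in {ξ : E | R ≤ ‖ξ‖},
          ENNReal.ofReal (anisotropicWeight e ξ ^ s * ‖h ξ‖ ^ 2)) ≤
        ∫⁻ ξ, dissipation b (charFun μ) ξ * ENNReal.ofReal (‖h ξ‖ ^ 2) := by
  obtain ⟨δ, hδ, c₀, hc₀, hμ⟩ := exists_mul_inner_sq_le_one_sub_norm_charFun he hline hdirac
  obtain ⟨R, hR, c, hc, hdiss⟩ :=
    exists_mul_anisotropicWeight_rpow_le_dissipation hE hK hb_nonneg hb he hc₀ hδ hμ
  refine ⟨R, hR, c, hc, fun h ↦ ?_⟩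
  calc _ = ∫⁻ ξ in {ξ : E | R ≤ ‖ξ‖},
        ENNReal.ofReal (c * anisotropicWeight e ξ ^ s) * ENNReal.ofReal (‖h ξ‖ ^ 2) := by
        rw [← lintegral_const_mul' _ _ ENNReal.ofReal_ne_top]
        simp_rw [← ENNReal.ofReal_mul hc.le, ← mul_assoc, ENNReal.ofReal_mul' (sq_nonneg ‖h _‖)]
    _ ≤ ∫⁻ ξ in {ξ : E | R ≤ ‖ξ‖},
        dissipation b (charFun μ) ξ * ENNReal.ofReal (‖h ξ‖ ^ 2) := by
      refine setLIntegral_mono' (measurableSet_le measurable_const measurable_norm) fun ξ hξ ↦ ?_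
      gcongr
      exact hdiss ξ hξ
    _ ≤ ∫⁻ ξ, dissipation b (charFun μ) ξ * ENNReal.ofReal (‖h ξ‖ ^ 2) :=
      setLIntegral_le_lintegral _ _

end Dissipation

section ThirdAxis

lemma norm_charFn (μ : Measure E3) (ξ : E3) : ‖charFn μ ξ‖ = ‖charFun μ ξ‖ := by
  have hneg : charFn μ ξ = charFun μ (-ξ) := by
    rw [charFn, charFun_apply]
    congr 1 with v
    rw [inner_neg_right, Complex.ofReal_neg, neg_mul, mul_comm]
  rw [hneg, charFun_neg, RCLike.norm_conj]

lemma mem_span_single_two_iff {v : E3} :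
    v ∈ Submodule.span ℝ {EuclideanSpace.single 2 (1 : ℝ)} ↔ v 0 = 0 ∧ v 1 = 0 := by
  rw [Submodule.mem_span_singleton]
  constructor
  · rintro ⟨r, rfl⟩
    simp
  · rintro ⟨h0, h1⟩
    refine ⟨v 2, ?_⟩
    ext i
    fin_cases i <;> simp [h0, h1]

lemma ae_mem_span_single_two {μ : Measure E3} [IsProbabilityMeasure μ]
    (hμ : μ {v | v 0 = 0 ∧ v 1 = 0} = 1) :
    ∀ᵐ v ∂μ, v ∈ Submodule.span ℝ {EuclideanSpace.single 2 (1 : ℝ)} := by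
  have hclosed : IsClosed {v : E3 | v 0 = 0 ∧ v 1 = 0} :=
    (isClosed_eq (by fun_prop) continuous_const).inter
      (isClosed_eq (by fun_prop) continuous_const)
  simp_rw [mem_span_single_two_iff]
  exact (mem_ae_iff_prob_eq_one hclosed.measurableSet).2 hμ

lemma anisotropicWeight_single_two (ξ : E3) :
    anisotropicWeight (EuclideanSpace.single 2 1) ξ = ξ 0 ^ 2 + ξ 1 ^ 2 + |ξ 2| := by
  simp [anisotropicWeight, EuclideanSpace.inner_single_left, EuclideanSpace.real_norm_sq_eq,
    Fin.sum_univ_three]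

lemma dissipation_charFun (b : ℝ → ℝ) (μ : Measure E3) (ξ : E3) :
    dissipation b (charFun μ) ξ =
      ∫⁻ σ, ENNReal.ofReal (b (⟪ξ, (σ : E3)⟫ / ‖ξ‖) * (1 - ‖charFn μ (xiMinus ξ σ)‖)) ∂sphμ := by
  simp_rw [norm_charFn]
  rfl

end ThirdAxis

/-- anisotropic degenerate coercivity for the initial
characteristic function of a measure concentrated on the third coordinate axis. -/
theorem anisotropic_degenerate_coercivity
    (s K : ℝ) (hs0 : 0 < s) (hs1 : s < 1) (hK : 0 < K)
    (b : ℝ → ℝ) (hb_meas : Measurable b) (hb_nonneg : ∀ x, 0 ≤ b x)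
    (hb_sing : KernelSingular b s K)
    (F₀ : Measure E3) [IsProbabilityMeasure F₀]
    (haxis : F₀ {v : E3 | v 0 = 0 ∧ v 1 = 0} = 1)
    (hnotdirac : ∀ u : E3, F₀ {u} ≠ 1) :
    ∃ R > (0:ℝ), ∃ c > (0:ℝ), ∀ h : E3 → ℂ, Measurable h →
      (∫⁻ ξ : E3, ENNReal.ofReal ((1 + ‖ξ‖ ^ 2) ^ s * ‖h ξ‖ ^ 2)) < ⊤ →
      ENNReal.ofReal c *
          (∫⁻ ξ : E3 in {ξ : E3 | R ≤ ‖ξ‖},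
            ENNReal.ofReal (((ξ 0) ^ 2 + (ξ 1) ^ 2 + |ξ 2|) ^ s * ‖h ξ‖ ^ 2)) ≤
        ∫⁻ ξ : E3,
          (∫⁻ σ, ENNReal.ofReal
              (b (⟪ξ, (σ : E3)⟫ / ‖ξ‖) * (1 - ‖charFn F₀ (xiMinus ξ σ)‖)) ∂sphμ)
            * ENNReal.ofReal (‖h ξ‖ ^ 2) := by
  have hb : Tendsto (fun θ ↦ b (cos θ) * θ ^ ((finrank ℝ E3 : ℝ) - 1 + 2 * s)) (𝓝[>] 0) (𝓝 K) := by
    rw [finrank_euclideanSpace_fin]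
    norm_num
    exact hb_sing
  obtain ⟨R, hR, c, hc, hcoercive⟩ := anisotropic_degenerate_coercivity_general (by simp) hK
    hb_nonneg hb (by simp) (ae_mem_span_single_two haxis) hnotdirac
  simp_rw [anisotropicWeight_single_two, dissipation_charFun] at hcoercive
  exact ⟨R, hR, c, hc, fun h _ _ ↦ hcoercive h⟩
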